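/- Let c : T*₂₄ → {1, 2, 3} be any function such that c(x) ≠ c(y) whenever x, y ∈ T*₂₄ satisfy ‖x − y‖ = 1 (a proper 3-colouring of the edge graph of the 24-cell with vertex set T*₂₄). Then the three fibers of c are exactly the three left cosets of Q₈ = {±1, ±i, ±j, ±k} in T*₂₄. In other words, the 24-cell has a unique 3-colouring up to permutation of the colours. -/

import Mathlib

/-- The imaginary unit `i` of the real quaternions. -/
def qi : Quaternion ℝ := ⟨0, 1, 0, 0⟩
/-- The imaginary unit `j` of the real quaternions. -/
def qj : Quaternion ℝ := ⟨0, 0, 1, 0⟩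
/-- The imaginary unit `k` of the real quaternions. -/
def qk : Quaternion ℝ := ⟨0, 0, 0, 1⟩

/-- The quaternion group `Q₈ = {±1, ±i, ±j, ±k}`. -/
def Q8 : Set (Quaternion ℝ) := {1, -1, qi, -qi, qj, -qj, qk, -qk}

/-- The binary tetrahedral group `T*₂₄` as a set of real quaternions. -/
def T24 : Set (Quaternion ℝ) :=
  Q8 ∪
    {x | ∃ e₀ e₁ e₂ e₃ : ℝ, (e₀ = 1 ∨ e₀ = -1) ∧ (e₁ = 1 ∨ e₁ = -1) ∧
      (e₂ = 1 ∨ e₂ = -1) ∧ (e₃ = 1 ∨ e₃ = -1) ∧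
      x = ((e₀ : Quaternion ℝ) + (e₁ : Quaternion ℝ) * qi + (e₂ : Quaternion ℝ) * qj +
        (e₃ : Quaternion ℝ) * qk) / 2}

/-!
Write `ω = (1 + i + j + k) / 2`. The vertices `1`, `i`, `j` are all adjacent to both ends of the
edge joining `ω` and `ω - k`, so a 3-colouring gives them the same colour. Left translations are
automorphisms of the 24-cell, hence `x`, `x * i` and `x * j` share a colour for every vertex `x`;
as `i` and `j` generate `Q₈`, colours are constant on left cosets of `Q₈`. Conversely a vertex
`g ∉ Q₈` has real part `±1/2`, so `g` or `-g` is adjacent to `1`; translating by `x` and using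
`-1 ∈ Q₈`, the vertices `x` and `x * g` have different colours.

That `T*₂₄` is a group is seen by identifying it with the Hurwitz quaternions of norm `1`.
-/

open scoped Quaternion

section Integers

theorem sq_eq_one_of_sum_sq_eq_four {a b c d : ℤ} (ha : a ≠ 0) (hb : b ≠ 0) (hc : c ≠ 0)
    (hd : d ≠ 0) (h : a ^ 2 + b ^ 2 + c ^ 2 + d ^ 2 = 4) :
    a ^ 2 = 1 ∧ b ^ 2 = 1 ∧ c ^ 2 = 1 ∧ d ^ 2 = 1 := by
  have one_le_sq {m : ℤ} (hm : m ≠ 0) : 1 ≤ m ^ 2 := Int.add_one_le_iff.2 (sq_pos_of_ne_zero hm)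
  have := one_le_sq ha
  have := one_le_sq hb
  have := one_le_sq hc
  have := one_le_sq hd
  omega

theorem eq_one_or_neg_one_of_sum_sq_eq_one {a b c d : ℤ}
    (h : a ^ 2 + b ^ 2 + c ^ 2 + d ^ 2 = 1) :
    (a = 1 ∨ a = -1) ∧ b = 0 ∧ c = 0 ∧ d = 0 ∨ a = 0 ∧ (b = 1 ∨ b = -1) ∧ c = 0 ∧ d = 0 ∨
      a = 0 ∧ b = 0 ∧ (c = 1 ∨ c = -1) ∧ d = 0 ∨ a = 0 ∧ b = 0 ∧ c = 0 ∧ (d = 1 ∨ d = -1) := by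
  simp only [← sq_eq_one_iff, ← sq_eq_zero_iff (a := a), ← sq_eq_zero_iff (a := b),
    ← sq_eq_zero_iff (a := c), ← sq_eq_zero_iff (a := d)]
  have := sq_nonneg a
  have := sq_nonneg b
  have := sq_nonneg c
  have := sq_nonneg d
  omega

end Integers

section Coordinates

@[simp]
theorem coords_qi : qi.re = 0 ∧ qi.imI = 1 ∧ qi.imJ = 0 ∧ qi.imK = 0 := ⟨rfl, rfl, rfl, rfl⟩

@[simp]
theorem coords_qj : qj.re = 0 ∧ qj.imI = 0 ∧ qj.imJ = 1 ∧ qj.imK = 0 := ⟨rfl, rfl, rfl, rfl⟩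

@[simp]
theorem coords_qk : qk.re = 0 ∧ qk.imI = 0 ∧ qk.imJ = 0 ∧ qk.imK = 1 := ⟨rfl, rfl, rfl, rfl⟩

@[simp]
theorem coords_div_two (x : ℍ[ℝ]) : (x / 2).re = x.re / 2 ∧ (x / 2).imI = x.imI / 2 ∧
    (x / 2).imJ = x.imJ / 2 ∧ (x / 2).imK = x.imK / 2 := by
  have inv_two : (2 : ℍ[ℝ])⁻¹ = ((2⁻¹ : ℝ) : ℍ[ℝ]) := (Quaternion.coe_inv 2).symm
  rw [div_eq_mul_inv, inv_two, Quaternion.mul_coe_eq_smul]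
  simp [inv_mul_eq_div]

theorem norm_eq_one_iff_sum_sq (x : ℍ[ℝ]) :
    ‖x‖ = 1 ↔ x.re ^ 2 + x.imI ^ 2 + x.imJ ^ 2 + x.imK ^ 2 = 1 := by
  rw [← Quaternion.normSq_def', Quaternion.normSq_eq_norm_mul_self, ← sq,
    pow_eq_one_iff_of_nonneg (norm_nonneg x) two_ne_zero]

end Coordinates

section Hurwitz

/-- The ring of Hurwitz quaternions, whose coordinates are all integers or all halves of odd
integers. It is encoded by coordinates in the `ℤ`-basis `(1 + i + j + k) / 2`, `i`, `j`, `k`, which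
treats both cases at once. -/
def hurwitz : Subring ℍ[ℝ] where
  carrier := {x | ∃ t n p q : ℤ,
    x.re = t / 2 ∧ x.imI = t / 2 + n ∧ x.imJ = t / 2 + p ∧ x.imK = t / 2 + q}
  one_mem' := ⟨2, -1, -1, -1, by norm_num⟩
  zero_mem' := ⟨0, 0, 0, 0, by simp⟩
  add_mem' := by
    rintro x y ⟨t, n, p, q, ht, hn, hp, hq⟩ ⟨t', n', p', q', ht', hn', hp', hq'⟩
    refine ⟨t + t', n + n', p + p', q + q', ?_⟩
    simp only [Quaternion.re_add, Quaternion.imI_add, Quaternion.imJ_add, Quaternion.imK_add, *]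
    push_cast
    refine ⟨?_, ?_, ?_, ?_⟩ <;> ring
  neg_mem' := by
    rintro x ⟨t, n, p, q, ht, hn, hp, hq⟩
    refine ⟨-t, -n, -p, -q, ?_⟩
    simp only [Quaternion.re_neg, Quaternion.imI_neg, Quaternion.imJ_neg, Quaternion.imK_neg, *]
    push_cast
    refine ⟨?_, ?_, ?_, ?_⟩ <;> ring
  mul_mem' := by
    rintro x y ⟨t, n, p, q, ht, hn, hp, hq⟩ ⟨t', n', p', q', ht', hn', hp', hq'⟩
    -- For `z = x * y` these are `2 * z.re`, `z.imI - z.re`, `z.imJ - z.re` and `z.imK - z.re`.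
    refine ⟨-t * t' - t * (n' + p' + q') - t' * (n + p + q) - 2 * (n * n' + p * p' + q * q'),
      t * t' + t * (n' + q') + t' * (n + p) + (n * n' + p * p' + q * q') + (p * q' - q * p'),
      t * t' + t * (n' + p') + t' * (p + q) + (n * n' + p * p' + q * q') + (q * n' - n * q'),
      t * t' + t * (p' + q') + t' * (n + q) + (n * n' + p * p' + q * q') + (n * p' - p * n'), ?_⟩
    simp only [Quaternion.re_mul, Quaternion.imI_mul, Quaternion.imJ_mul, Quaternion.imK_mul, *]
    push_cast
    refine ⟨?_, ?_, ?_, ?_⟩ <;> ring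

theorem star_mem_hurwitz {x : ℍ[ℝ]} (hx : x ∈ hurwitz) : star x ∈ hurwitz := by
  obtain ⟨t, n, p, q, ht, hn, hp, hq⟩ := hx
  refine ⟨t, -t - n, -t - p, -t - q, ?_⟩
  rw [Quaternion.re_star, Quaternion.imI_star, Quaternion.imJ_star, Quaternion.imK_star, ht, hn, hp,
    hq]
  push_cast
  exact ⟨rfl, by ring, by ring, by ring⟩

end Hurwitz

section BinaryTetrahedral

theorem inv_eq_star_of_norm_eq_one {x : ℍ[ℝ]} (hx : ‖x‖ = 1) : x⁻¹ = star x := by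
  rw [Quaternion.inv_def, Quaternion.normSq_eq_norm_mul_self, hx, mul_one, inv_one, one_smul]

theorem mem_T24_iff_mem_Q8_or {x : ℍ[ℝ]} : x ∈ T24 ↔ x ∈ Q8 ∨
    x.re ^ 2 = (1 / 2) ^ 2 ∧ x.imI ^ 2 = (1 / 2) ^ 2 ∧ x.imJ ^ 2 = (1 / 2) ^ 2 ∧
      x.imK ^ 2 = (1 / 2) ^ 2 := by
  refine or_congr Iff.rfl ?_
  simp only [Set.mem_ofPred_eq, ← sq_eq_one_iff]
  constructor
  · rintro ⟨a, b, c, d, ha, hb, hc, hd, rfl⟩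
    simp [div_pow, ha, hb, hc, hd]
  · rintro ⟨ha, hb, hc, hd⟩
    refine ⟨2 * x.re, 2 * x.imI, 2 * x.imJ, 2 * x.imK, ?_, ?_, ?_, ?_, ?_⟩
    · linear_combination 4 * ha
    · linear_combination 4 * hb
    · linear_combination 4 * hc
    · linear_combination 4 * hd
    · ext <;> simp

theorem mem_Q8_of_int_coords {x : ℍ[ℝ]} (hx : ‖x‖ = 1) {a b c d : ℤ} (ha : x.re = a)
    (hb : x.imI = b) (hc : x.imJ = c) (hd : x.imK = d) : x ∈ Q8 := by
  rw [norm_eq_one_iff_sum_sq, ha, hb, hc, hd] at hx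
  have hsum : a ^ 2 + b ^ 2 + c ^ 2 + d ^ 2 = 1 := mod_cast hx
  simp only [Q8, Set.mem_insert_iff, Set.mem_singleton_iff, Quaternion.ext_iff, ha, hb, hc, hd]
  rcases eq_one_or_neg_one_of_sum_sq_eq_one hsum with h | h | h | h
  · obtain ⟨rfl | rfl, rfl, rfl, rfl⟩ := h <;> simp
  · obtain ⟨rfl, rfl | rfl, rfl, rfl⟩ := h <;> simp
  · obtain ⟨rfl, rfl, rfl | rfl, rfl⟩ := h <;> simp
  · obtain ⟨rfl, rfl, rfl, rfl | rfl⟩ := h <;> simp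

theorem Q8_subset_hurwitz : Q8 ⊆ hurwitz := by
  have hi : qi ∈ hurwitz := ⟨0, 1, 0, 0, by simp⟩
  have hj : qj ∈ hurwitz := ⟨0, 0, 1, 0, by simp⟩
  have hk : qk ∈ hurwitz := ⟨0, 0, 0, 1, by simp⟩
  rintro x (rfl | rfl | rfl | rfl | rfl | rfl | rfl | rfl)
  exacts [one_mem _, neg_mem (one_mem _), hi, neg_mem hi, hj, neg_mem hj, hk, neg_mem hk]

theorem T24_subset_hurwitz : T24 ⊆ hurwitz := by
  intro x hx
  rcases mem_T24_iff_mem_Q8_or.1 hx with hx | ⟨ha, hb, hc, hd⟩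
  · exact Q8_subset_hurwitz hx
  · have half_add_int {a : ℝ} (ha : a ^ 2 = (1 / 2) ^ 2) : ∃ m : ℤ, a = 1 / 2 + m := by
      rcases sq_eq_sq_iff_eq_or_eq_neg.1 ha with rfl | rfl
      exacts [⟨0, by norm_num⟩, ⟨-1, by norm_num⟩]
    obtain ⟨a, ha⟩ := half_add_int ha
    obtain ⟨b, hb⟩ := half_add_int hb
    obtain ⟨c, hc⟩ := half_add_int hc
    obtain ⟨d, hd⟩ := half_add_int hd
    refine ⟨2 * a + 1, b - a, c - a, d - a, ?_⟩
    rw [ha, hb, hc, hd]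
    push_cast
    refine ⟨?_, ?_, ?_, ?_⟩ <;> ring

theorem norm_of_mem_T24 {x : ℍ[ℝ]} (hx : x ∈ T24) : ‖x‖ = 1 := by
  rw [norm_eq_one_iff_sum_sq]
  rcases mem_T24_iff_mem_Q8_or.1 hx with hx | ⟨ha, hb, hc, hd⟩
  · rcases hx with rfl | rfl | rfl | rfl | rfl | rfl | rfl | rfl <;> simp
  · linarith

theorem mem_T24_of_mem_hurwitz {x : ℍ[ℝ]} (hx : x ∈ hurwitz) (hnorm : ‖x‖ = 1) : x ∈ T24 := by
  obtain ⟨t, n, p, q, ht, hn, hp, hq⟩ := hx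
  rw [mem_T24_iff_mem_Q8_or]
  rcases Int.even_or_odd t with ⟨m, rfl⟩ | hodd
  · left
    push_cast at ht hn hp hq
    apply mem_Q8_of_int_coords hnorm (a := m) (b := m + n) (c := m + p) (d := m + q) <;>
      push_cast <;> linarith
  · right
    have hsum : t ^ 2 + (t + 2 * n) ^ 2 + (t + 2 * p) ^ 2 + (t + 2 * q) ^ 2 = 4 := by
      rw [norm_eq_one_iff_sum_sq, ht, hn, hp, hq] at hnorm
      have : (t ^ 2 + (t + 2 * n) ^ 2 + (t + 2 * p) ^ 2 + (t + 2 * q) ^ 2 : ℝ) = 4 := by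
        linear_combination 4 * hnorm
      exact_mod_cast this
    have ht0 : t ≠ 0 := by grind
    have hadd (m : ℤ) : t + 2 * m ≠ 0 := by grind
    obtain ⟨ha, hb, hc, hd⟩ := sq_eq_one_of_sum_sq_eq_four ht0 (hadd n) (hadd p) (hadd q) hsum
    rify at ha hb hc hd
    rw [ht, hn, hp, hq]
    refine ⟨?_, ?_, ?_, ?_⟩ <;> linarith

theorem mem_T24_iff {x : ℍ[ℝ]} : x ∈ T24 ↔ x ∈ hurwitz ∧ ‖x‖ = 1 :=
  ⟨fun hx => ⟨T24_subset_hurwitz hx, norm_of_mem_T24 hx⟩,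
    fun hx => mem_T24_of_mem_hurwitz hx.1 hx.2⟩

theorem one_mem_T24 : (1 : ℍ[ℝ]) ∈ T24 := .inl (.inl rfl)

theorem qi_mem_T24 : qi ∈ T24 := .inl (by simp [Q8])

theorem mul_mem_T24 {x y : ℍ[ℝ]} (hx : x ∈ T24) (hy : y ∈ T24) : x * y ∈ T24 := by
  rw [mem_T24_iff] at *
  exact ⟨mul_mem hx.1 hy.1, by rw [norm_mul, hx.2, hy.2, one_mul]⟩

theorem inv_mem_T24 {x : ℍ[ℝ]} (hx : x ∈ T24) : x⁻¹ ∈ T24 := by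
  rw [mem_T24_iff] at *
  exact ⟨inv_eq_star_of_norm_eq_one hx.2 ▸ star_mem_hurwitz hx.1, by rw [norm_inv, hx.2, inv_one]⟩

theorem neg_mem_T24 {x : ℍ[ℝ]} (hx : x ∈ T24) : -x ∈ T24 := by
  rw [mem_T24_iff] at *
  exact ⟨neg_mem hx.1, by rw [norm_neg, hx.2]⟩

theorem ne_zero_of_mem_T24 {x : ℍ[ℝ]} (hx : x ∈ T24) : x ≠ 0 :=
  norm_ne_zero_iff.1 (by rw [norm_of_mem_T24 hx]; exact one_ne_zero)

end BinaryTetrahedral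

section Graph

/-- The edge graph of the 24-cell with vertex set `T24`. It is encoded as a graph on all
quaternions, in which those outside `T24` are isolated, so that colourings are defined on `ℍ[ℝ]`. -/
def cell24Graph : SimpleGraph ℍ[ℝ] where
  Adj x y := x ∈ T24 ∧ y ∈ T24 ∧ ‖x - y‖ = 1
  symm := ⟨fun _ _ ⟨hx, hy, h⟩ => ⟨hy, hx, (norm_sub_rev _ _).trans h⟩⟩
  loopless := ⟨fun _ ⟨_, _, h⟩ => by simp at h⟩

theorem adj_mul_left {x a b : ℍ[ℝ]} (hx : x ∈ T24) (h : cell24Graph.Adj a b) :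
    cell24Graph.Adj (x * a) (x * b) := by
  obtain ⟨ha, hb, hab⟩ := h
  exact ⟨mul_mem_T24 hx ha, mul_mem_T24 hx hb,
    by rw [← mul_sub, norm_mul, norm_of_mem_T24 hx, hab, one_mul]⟩

theorem adj_one_of_re_eq_half {g : ℍ[ℝ]} (hg : g ∈ T24) (hre : g.re = 1 / 2) :
    cell24Graph.Adj 1 g := by
  refine ⟨one_mem_T24, hg, ?_⟩
  have hnorm := (norm_eq_one_iff_sum_sq g).1 (norm_of_mem_T24 hg)
  rw [norm_eq_one_iff_sum_sq]
  simp only [Quaternion.re_sub, Quaternion.imI_sub, Quaternion.imJ_sub, Quaternion.imK_sub,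
    Quaternion.re_one, Quaternion.imI_one, Quaternion.imJ_one, Quaternion.imK_one]
  linear_combination hnorm - 2 * hre

theorem adj_one_or_adj_neg_one {g : ℍ[ℝ]} (hg : g ∈ T24) (hQ : g ∉ Q8) :
    cell24Graph.Adj 1 g ∨ cell24Graph.Adj (-1) g := by
  obtain ⟨hre, -⟩ := (mem_T24_iff_mem_Q8_or.1 hg).resolve_left hQ
  rcases sq_eq_sq_iff_eq_or_eq_neg.1 hre with hre | hre
  · exact .inl (adj_one_of_re_eq_half hg hre)
  · right
    simpa using adj_mul_left (neg_mem_T24 one_mem_T24)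
      (adj_one_of_re_eq_half (neg_mem_T24 hg) (by simp [hre]))

/-- The Hurwitz unit `ω = (1 + i + j + k) / 2`, one end of the edge whose common neighbours are
`1`, `i` and `j`. -/
noncomputable def qω : ℍ[ℝ] := (1 + qi + qj + qk) / 2

theorem adj_qω : cell24Graph.Adj qω (qω - qk) := by
  refine ⟨mem_T24_iff_mem_Q8_or.2 (.inr ?_), mem_T24_iff_mem_Q8_or.2 (.inr ?_), ?_⟩
  all_goals norm_num [qω, norm_eq_one_iff_sum_sq]

theorem adj_qω_of_mem_one_qi_qj {u : ℍ[ℝ]} (hu : u ∈ ({1, qi, qj} : Set ℍ[ℝ])) :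
    cell24Graph.Adj u qω ∧ cell24Graph.Adj u (qω - qk) := by
  obtain ⟨hω, hωk, -⟩ := adj_qω
  have hQ : u ∈ Q8 := by rcases hu with rfl | rfl | rfl <;> simp [Q8]
  refine ⟨⟨.inl hQ, hω, ?_⟩, ⟨.inl hQ, hωk, ?_⟩⟩ <;> rw [norm_eq_one_iff_sum_sq] <;>
    rcases hu with rfl | rfl | rfl <;> norm_num [qω]

end Graph

section Colouring

theorem coloring_eq_of_common_edge {V : Type*} {G : SimpleGraph V} (C : G.Coloring (Fin 3))
    {a b u v : V} (hab : G.Adj a b) (hua : G.Adj u a) (hub : G.Adj u b) (hva : G.Adj v a)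
    (hvb : G.Adj v b) : C u = C v := by
  have := C.valid hab
  have := C.valid hua
  have := C.valid hub
  have := C.valid hva
  have := C.valid hvb
  omega

variable (C : cell24Graph.Coloring (Fin 3)) {x : ℍ[ℝ]}

theorem coloring_mul_of_mem_one_qi_qj (hx : x ∈ T24) {u : ℍ[ℝ]}
    (hu : u ∈ ({1, qi, qj} : Set ℍ[ℝ])) : C (x * u) = C x := by
  have adj {v : ℍ[ℝ]} (hv : v ∈ ({1, qi, qj} : Set ℍ[ℝ])) :
      cell24Graph.Adj (x * v) (x * qω) ∧ cell24Graph.Adj (x * v) (x * (qω - qk)) :=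
    (adj_qω_of_mem_one_qi_qj hv).imp (adj_mul_left hx) (adj_mul_left hx)
  obtain ⟨huω, huωk⟩ := adj hu
  obtain ⟨h1ω, h1ωk⟩ := adj (.inl rfl)
  simpa only [mul_one] using
    coloring_eq_of_common_edge C (adj_mul_left hx adj_qω) huω huωk h1ω h1ωk

theorem coloring_mul_qi (hx : x ∈ T24) : C (x * qi) = C x :=
  coloring_mul_of_mem_one_qi_qj C hx (by simp)

theorem coloring_mul_qj (hx : x ∈ T24) : C (x * qj) = C x :=
  coloring_mul_of_mem_one_qi_qj C hx (by simp)

theorem coloring_neg (hx : x ∈ T24) : C (-x) = C x := by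
  have qi_mul_qi : qi * qi = -1 := by ext <;> simp
  have hxi : x * qi ∈ T24 := mul_mem_T24 hx qi_mem_T24
  calc C (-x) = C (x * qi * qi) := by rw [mul_assoc, qi_mul_qi, mul_neg_one]
    _ = C (x * qi) := coloring_mul_qi C hxi
    _ = C x := coloring_mul_qi C hx

theorem coloring_mul_qk (hx : x ∈ T24) : C (x * qk) = C x := by
  have qi_mul_qj : qi * qj = qk := by ext <;> simp
  have hxi : x * qi ∈ T24 := mul_mem_T24 hx qi_mem_T24
  rw [← qi_mul_qj, ← mul_assoc, coloring_mul_qj C hxi, coloring_mul_qi C hx]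

theorem coloring_mul_of_mem_Q8 (hx : x ∈ T24) {g : ℍ[ℝ]} (hg : g ∈ Q8) : C (x * g) = C x := by
  rcases hg with rfl | rfl | rfl | rfl | rfl | rfl | rfl | rfl
  · rw [mul_one]
  · rw [mul_neg_one, coloring_neg C hx]
  · exact coloring_mul_qi C hx
  · rw [mul_neg, ← neg_mul, coloring_mul_qi C (neg_mem_T24 hx), coloring_neg C hx]
  · exact coloring_mul_qj C hx
  · rw [mul_neg, ← neg_mul, coloring_mul_qj C (neg_mem_T24 hx), coloring_neg C hx]
  · exact coloring_mul_qk C hx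
  · rw [mul_neg, ← neg_mul, coloring_mul_qk C (neg_mem_T24 hx), coloring_neg C hx]

theorem coloring_ne_of_notMem_Q8 (hx : x ∈ T24) {g : ℍ[ℝ]} (hg : g ∈ T24) (hQ : g ∉ Q8) :
    C x ≠ C (x * g) := by
  rcases adj_one_or_adj_neg_one hg hQ with h | h
  · simpa only [mul_one] using C.valid (adj_mul_left hx h)
  · simpa only [mul_neg_one, coloring_neg C hx] using C.valid (adj_mul_left hx h)

end Colouring

/-- Uniqueness of the 3-colouring of the 24-cell: for any function `c` assigning one of three
colours to the elements of `T*₂₄` such that vertices at distance `1` (i.e. joined by an edge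
of the 24-cell) get distinct colours, two elements of `T*₂₄` have the same colour if and only
if they lie in the same left coset of `Q₈`.  Thus the fibers of `c` are exactly the three
left cosets of `Q₈` in `T*₂₄`, and the 3-colouring is unique up to permuting the colours. -/
theorem unique_three_colouring_of_24cell (c : Quaternion ℝ → Fin 3)
    (hc : ∀ x ∈ T24, ∀ y ∈ T24, ‖x - y‖ = 1 → c x ≠ c y) :
    ∀ x ∈ T24, ∀ y ∈ T24, (c x = c y ↔ x⁻¹ * y ∈ Q8) := by
  intro x hx y hy
  let C : cell24Graph.Coloring (Fin 3) := .mk c fun ⟨hx, hy, h⟩ => hc _ hx _ hy h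
  have hg : x⁻¹ * y ∈ T24 := mul_mem_T24 (inv_mem_T24 hx) hy
  have hy_eq : x * (x⁻¹ * y) = y := mul_inv_cancel_left₀ (ne_zero_of_mem_T24 hx) y
  constructor
  · intro hxy
    by_contra hQ
    exact coloring_ne_of_notMem_Q8 C hx hg hQ (hy_eq.symm ▸ hxy)
  · intro hQ
    exact (hy_eq ▸ coloring_mul_of_mem_Q8 C hx hQ : C y = C x).symm
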